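/- Let $N, p, q \in \mathbb{N}$, let $c_1, \dots, c_N \in \mathbb{R}$, $d \in \mathbb{R}^p$, and let $y_j : \mathbb{N} \to \mathbb{R}^p$ and $u_j : \mathbb{N} \to \mathbb{R}^q$ for $j = 1, \dots, N$. Fix an index $i$ and define $\xi(k) = \sum_{j=1}^{N} c_j y_j(k) + d$. Suppose there are constants $\phi_j \geq 0$ and $\sigma_j \geq 0$ such that for all $k \geq 1$: $\|y_j(k+1) - y_j(k)\| \leq \phi_j \|u_j(k) - u_j(k-1)\|$ and $\|u_j(k) - u_j(k-1)\| \leq \sigma_j \|u_i(k) - u_i(k-1)\|$. Then for every $k \geq 1$ with $u_i(k) \neq u_i(k-1)$ there exists a matrix $\Phi_i(k) \in \mathbb{R}^{p \times q}$ such that $\xi(k+1) - \xi(k) = \Phi_i(k)\,(u_i(k) - u_i(k-1))$ and the operator norm satisfies $\|\Phi_i(k)\| \leq \sum_{j=1}^{N} |c_j| \phi_j \sigma_j$. -/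

import Mathlib

open Finset Matrix

/-- The operator norm of a real matrix, induced by the Euclidean norms on domain
and codomain. -/
noncomputable def matOpNorm {p q : ℕ} (A : Matrix (Fin p) (Fin q) ℝ) : ℝ :=
  ‖(LinearMap.toContinuousLinearMap (Matrix.toEuclideanLin A) :
      EuclideanSpace ℝ (Fin q) →L[ℝ] EuclideanSpace ℝ (Fin p))‖

/-!
A single increment `x` constrains a linear map only along the line through `x`. By Hahn–Banach
there is a functional `g` of norm at most one with `g x = ‖x‖`; for `‖x‖ ≠ 0` the rank-one map
`z ↦ g z • (‖x‖⁻¹ • y)` then sends `x` to `y` and has norm at most `‖y‖ / ‖x‖`. The two Lipschitz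
bounds and the triangle inequality control this ratio.
-/

theorem exists_continuousLinearMap_apply_eq_norm_le {𝕜 E F : Type*} [RCLike 𝕜]
    [SeminormedAddCommGroup E] [NormedSpace 𝕜 E] [NormedAddCommGroup F] [NormedSpace 𝕜 F]
    {x : E} {y : F} {C : ℝ} (hC : 0 ≤ C) (hxy : ‖y‖ ≤ C * ‖x‖) :
    ∃ L : E →L[𝕜] F, L x = y ∧ ‖L‖ ≤ C := by
  obtain ⟨g, hg_norm, hgx⟩ := exists_dual_vector'' 𝕜 x
  refine ⟨g.smulRight ((‖x‖ : 𝕜)⁻¹ • y), ?_, ?_⟩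
  · rw [ContinuousLinearMap.smulRight_apply, hgx]
    rcases eq_or_ne ‖x‖ 0 with hx | hx
    · have hy : y = 0 := norm_le_zero_iff.mp (by simpa only [hx, mul_zero] using hxy)
      simp [hy]
    · exact smul_inv_smul₀ (RCLike.ofReal_ne_zero.mpr hx) y
  · calc ‖g.smulRight ((‖x‖ : 𝕜)⁻¹ • y)‖ = ‖g‖ * (‖y‖ / ‖x‖) := by
          rw [ContinuousLinearMap.norm_smulRight_apply, norm_smul, norm_inv, RCLike.norm_ofReal,
            abs_norm, inv_mul_eq_div]
      _ ≤ 1 * C := by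
          gcongr
          exact div_le_of_le_mul₀ (norm_nonneg x) hC hxy
      _ = C := one_mul C

theorem norm_sum_smul_le_sum_mul {ι R F : Type*} [SeminormedRing R] [SeminormedAddCommGroup F]
    [Module R F] [IsBoundedSMul R F] (s : Finset ι) (c : ι → R) {v : ι → F} {b : ι → ℝ} {r : ℝ}
    (hv : ∀ j ∈ s, ‖v j‖ ≤ b j * r) :
    ‖∑ j ∈ s, c j • v j‖ ≤ (∑ j ∈ s, ‖c j‖ * b j) * r := by
  rw [Finset.sum_mul]
  refine norm_sum_le_of_le s fun j hj => ?_
  calc ‖c j • v j‖ ≤ ‖c j‖ * ‖v j‖ := norm_smul_le _ _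
    _ ≤ ‖c j‖ * (b j * r) := by gcongr; exact hv j hj
    _ = ‖c j‖ * b j * r := (mul_assoc _ _ _).symm

theorem dcfdl_general {𝕜 ι E F : Type*} [RCLike 𝕜] [Fintype ι]
    [SeminormedAddCommGroup E] [NormedSpace 𝕜 E] [NormedAddCommGroup F] [NormedSpace 𝕜 F]
    (c : ι → 𝕜) (d : F) (y : ι → ℕ → F) (u : ι → ℕ → E) (i : ι) (ξ : ℕ → F)
    (hξ : ∀ k, ξ k = (∑ j, c j • y j k) + d)
    (φ σ : ι → ℝ) (hφ : ∀ j, 0 ≤ φ j) (hσ : ∀ j, 0 ≤ σ j)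
    (hy : ∀ j, ∀ k ≥ 1, ‖y j (k + 1) - y j k‖ ≤ φ j * ‖u j k - u j (k - 1)‖)
    (hu : ∀ j, ∀ k ≥ 1, ‖u j k - u j (k - 1)‖ ≤ σ j * ‖u i k - u i (k - 1)‖) :
    ∀ k ≥ 1, ∃ L : E →L[𝕜] F,
      ξ (k + 1) - ξ k = L (u i k - u i (k - 1)) ∧ ‖L‖ ≤ ∑ j, ‖c j‖ * φ j * σ j := by
  intro k hk
  have increment_eq : ξ (k + 1) - ξ k = ∑ j, c j • (y j (k + 1) - y j k) := by
    simp only [hξ, add_sub_add_right_eq_sub, smul_sub, Finset.sum_sub_distrib]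
  have output_le (j : ι) : ‖y j (k + 1) - y j k‖ ≤ φ j * σ j * ‖u i k - u i (k - 1)‖ := by
    rw [mul_assoc]
    exact (hy j k hk).trans (mul_le_mul_of_nonneg_left (hu j k hk) (hφ j))
  have increment_le :
      ‖ξ (k + 1) - ξ k‖ ≤ (∑ j, ‖c j‖ * φ j * σ j) * ‖u i k - u i (k - 1)‖ := by
    simpa only [increment_eq, mul_assoc] using
      norm_sum_smul_le_sum_mul Finset.univ c fun j _ => output_le j
  have bound_nonneg : 0 ≤ ∑ j, ‖c j‖ * φ j * σ j :=
    Finset.sum_nonneg fun j _ => mul_nonneg (mul_nonneg (norm_nonneg _) (hφ j)) (hσ j)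
  obtain ⟨L, hL, hL_norm⟩ :=
    exists_continuousLinearMap_apply_eq_norm_le (𝕜 := 𝕜) bound_nonneg increment_le
  exact ⟨L, hL.symm, hL_norm⟩

theorem matOpNorm_toEuclideanLin_symm {p q : ℕ}
    (L : EuclideanSpace ℝ (Fin q) →L[ℝ] EuclideanSpace ℝ (Fin p)) :
    matOpNorm (Matrix.toEuclideanLin.symm L.toLinearMap) = ‖L‖ := by
  rw [matOpNorm, LinearEquiv.apply_symm_apply]
  rfl

/-- distributed compact form dynamic linearization (DCFDL): the NABCE
increment admits a bounded pseudo-partitioned Jacobian matrix. -/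
theorem dcfdl (N p q : ℕ) (c : Fin N → ℝ)
    (d : EuclideanSpace ℝ (Fin p))
    (y : Fin N → ℕ → EuclideanSpace ℝ (Fin p))
    (u : Fin N → ℕ → EuclideanSpace ℝ (Fin q))
    (i : Fin N) (ξ : ℕ → EuclideanSpace ℝ (Fin p))
    (hξ : ∀ k, ξ k = (∑ j, c j • y j k) + d)
    (φ σ : Fin N → ℝ) (hφ : ∀ j, 0 ≤ φ j) (hσ : ∀ j, 0 ≤ σ j)
    (hy : ∀ j, ∀ k ≥ 1, ‖y j (k + 1) - y j k‖ ≤ φ j * ‖u j k - u j (k - 1)‖)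
    (hu : ∀ j, ∀ k ≥ 1, ‖u j k - u j (k - 1)‖ ≤ σ j * ‖u i k - u i (k - 1)‖) :
    ∀ k ≥ 1, u i k ≠ u i (k - 1) →
      ∃ Φ : Matrix (Fin p) (Fin q) ℝ,
        ξ (k + 1) - ξ k = Matrix.toEuclideanLin Φ (u i k - u i (k - 1)) ∧
        matOpNorm Φ ≤ ∑ j, |c j| * φ j * σ j := by
  intro k hk _
  obtain ⟨L, hL, hL_norm⟩ := dcfdl_general c d y u i ξ hξ φ σ hφ hσ hy hu k hk
  exact ⟨Matrix.toEuclideanLin.symm L.toLinearMap, by rwa [LinearEquiv.apply_symm_apply],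
    (matOpNorm_toEuclideanLin_symm L).trans_le hL_norm⟩
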